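/- The antibracket (·,·) and the R-bracket (·,·)_R are compatible in the sense Σ_{cycl. f,g,h} (-1)^{ε_f(ε_h+1)} ((f,g),h)_R = Σ_{cycl. f,g,h} (-1)^{ε_f(ε_h+1)+ε_g} ((f,g)_R, h) for all functions f,g,h; this follows from the closedness of the Ricci two-form R_{AB}. -/

import Mathlib

/-! The idea is to write the R-bracket as a coboundary.  Contracting the Hamiltonian vector
field `(f, ·)` with the connection gives the Grassmann-odd operation
`φ f = Σ_A (f, Γ^A) F_A` (`phi`).  Since the curvature is `R = dF`, Cartan's formula
`R(X,Y) = X F(Y) - Y F(X) - F([X,Y])` evaluated on Hamiltonian vector fields, for which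
`[X_f, X_g] = X_{(f,g)}` by the Jacobi identity, becomes (`brkt_curvUp`)

`(f,g)_R = (-1)^{ε_g} ((f, φ g) - φ (f,g)) - (φ f, g)`.

Substituting this in both sides of the claim, the terms `(φ (f,g), h)` agree, the terms
`φ ((f,g), h)` cancel by the Jacobi identity for `f, g, h`, and what remains is the Jacobi
identity for the triples `(f, g, φ h)`, `(g, h, φ f)` and `(h, f, φ g)`.  Closedness of
`R_{AB}` thus enters through the potential `F`. -/

open scoped BigOperators

noncomputable section

/-- The sign `(-1)^p` for a parity `p : ZMod 2`, valued in `ℚ`. -/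
def sgn (p : ZMod 2) : ℚ := if p = 0 then 1 else -1

/-- A supercommutative algebra of "functions on a superdomain" with local coordinates
`coord i`, Grassmann parities `ε i`, and left partial derivatives `D i`. -/
structure SuperAlg (ι : Type) [Fintype ι] [DecidableEq ι]
    (A : Type) [Ring A] [Algebra ℚ A] where
  ε : ι → ZMod 2
  hom : ZMod 2 → Submodule ℚ A
  one_mem : (1 : A) ∈ hom 0
  mul_mem : ∀ {p q : ZMod 2} {a b : A}, a ∈ hom p → b ∈ hom q → a * b ∈ hom (p + q)
  supercomm : ∀ {p q : ZMod 2} {a b : A}, a ∈ hom p → b ∈ hom q →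
    a * b = sgn (p * q) • (b * a)
  D : ι → A →ₗ[ℚ] A
  D_mem : ∀ (i : ι) {p : ZMod 2} {a : A}, a ∈ hom p → D i a ∈ hom (p + ε i)
  D_leibniz : ∀ (i : ι) {p : ZMod 2} {a : A} (b : A), a ∈ hom p →
    D i (a * b) = D i a * b + sgn (ε i * p) • (a * D i b)
  D_comm : ∀ (i j : ι) (a : A), D i (D j a) = sgn (ε i * ε j) • D j (D i a)
  coord : ι → A
  coord_mem : ∀ i, coord i ∈ hom (ε i)
  D_coord : ∀ i j, D i (coord j) = if i = j then (1 : A) else 0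

namespace SuperAlg

variable {ι : Type} [Fintype ι] [DecidableEq ι]
variable {A : Type} [Ring A] [Algebra ℚ A]

/-- The operator of left multiplication by `f`. -/
def L (f : A) : A →ₗ[ℚ] A := LinearMap.mulLeft ℚ f

/-- The graded commutator `[T,U] = T∘U - (-1)^{pq} U∘T` of operators of parities `p`, `q`. -/
def gcomm (p q : ZMod 2) (T U : A →ₗ[ℚ] A) : A →ₗ[ℚ] A :=
  T ∘ₗ U - sgn (p * q) • (U ∘ₗ T)

variable (S : SuperAlg ι A)

/-- The bracket `(f,g) = (f ∂⃖_A) M^{AB} (∂_B g)` built from the matrix `M`,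
for `f` homogeneous of parity `pf`; the right derivative is expressed through
the left one via `f ∂⃖_A = (-1)^{ε_A (ε_f + 1)} ∂_A f`. -/
def brkt (M : ι → ι → A) (pf : ZMod 2) (f g : A) : A :=
  ∑ a, ∑ b, sgn (S.ε a * (pf + 1)) • (S.D a f * (M a b * S.D b g))

/-- The first-order operator `(x, ·)` (for Grassmann-odd `x`), built from the matrix `M`. -/
def Hop (M : ι → ι → A) (x : A) : A →ₗ[ℚ] A :=
  ∑ a, ∑ b, L (S.D a x) ∘ₗ L (M a b) ∘ₗ S.D b

/-- The Laplacian `((-1)^{ε_A}/2)(∂_A + F_A) M^{AB} ∂_B`. -/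
def lap (F : ι → A) (M : ι → ι → A) : A →ₗ[ℚ] A :=
  (1/2 : ℚ) • ∑ a, ∑ b, sgn (S.ε a) •
    ((S.D a ∘ₗ L (M a b) ∘ₗ S.D b) + (L (F a) ∘ₗ L (M a b) ∘ₗ S.D b))

/-- The curvature `R_{AB} = (∂_A F_B) - (-1)^{ε_A ε_B}(∂_B F_A)` of a line bundle
connection `F`. -/
def curv (F : ι → A) (a b : ι) : A :=
  S.D a (F b) - sgn (S.ε a * S.ε b) • S.D b (F a)

/-- The raised-index curvature `R^{AD} = E^{AB} R_{BC} E^{CD} (-1)^{ε_C}`. -/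
def curvUp (E : ι → ι → A) (F : ι → A) (a d : ι) : A :=
  ∑ b, ∑ c, sgn (S.ε c) • (E a b * (S.curv F b c * E c d))

/-- The graded Jacobi identity for the antibracket, on homogeneous functions. -/
def JacobiId (E : ι → ι → A) : Prop :=
  ∀ (pf pg ph : ZMod 2) (f g h : A),
    f ∈ S.hom pf → g ∈ S.hom pg → h ∈ S.hom ph →
      sgn ((pf + 1) * (ph + 1)) • S.brkt E pf f (S.brkt E pg g h)
      + sgn ((pg + 1) * (pf + 1)) • S.brkt E pg g (S.brkt E ph h f)
      + sgn ((ph + 1) * (pg + 1)) • S.brkt E ph h (S.brkt E pf f g) = 0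

/-- The closedness relation `Σ_{cycl. A,B,C} (-1)^{ε_A ε_C} (∂_A E_{BC}) = 0`
for the two-form with components `Einv`. -/
def ClosedId (Einv : ι → ι → A) : Prop :=
  ∀ a b c : ι,
    sgn (S.ε a * S.ε c) • S.D a (Einv b c)
    + sgn (S.ε b * S.ε a) • S.D b (Einv c a)
    + sgn (S.ε c * S.ε b) • S.D c (Einv a b) = 0

/-- The Jacobi identity `Σ_{cycl. A,B,C} (-1)^{(ε_A+1)(ε_C+1)} E^{AD} (∂_D E^{BC}) = 0`
in terms of the matrix `E^{AB}`. -/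
def EJacobiId (E : ι → ι → A) : Prop :=
  ∀ a b c : ι,
    ∑ d, (sgn ((S.ε a + 1) * (S.ε c + 1)) • (E a d * S.D d (E b c))
      + sgn ((S.ε b + 1) * (S.ε a + 1)) • (E b d * S.D d (E c a))
      + sgn ((S.ε c + 1) * (S.ε b + 1)) • (E c d * S.D d (E a b))) = 0

/-- `E` is a non-degenerate graded-skewsymmetric (2,0)-tensor with inverse `Einv`. -/
structure AntiSymp (E Einv : ι → ι → A) : Prop where
  E_mem : ∀ a b, E a b ∈ S.hom (S.ε a + S.ε b + 1)
  E_skew : ∀ a b, E a b = - sgn ((S.ε a + 1) * (S.ε b + 1)) • E b a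
  Einv_mem : ∀ a b, Einv a b ∈ S.hom (S.ε a + S.ε b + 1)
  Einv_skew : ∀ a b, Einv a b = - sgn (S.ε a * S.ε b) • Einv b a
  mul_inv : ∀ a c, ∑ b, E a b * Einv b c = if a = c then (1 : A) else 0
  inv_mul : ∀ a c, ∑ b, Einv a b * E b c = if a = c then (1 : A) else 0

/-- An operator `T` of parity `pT` is of at most first order iff all its double graded
commutators with left multiplication operators vanish. -/
def IsFirstOrder (pT : ZMod 2) (T : A →ₗ[ℚ] A) : Prop :=
  ∀ (pf pg : ZMod 2) (f g : A), f ∈ S.hom pf → g ∈ S.hom pg →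
    gcomm (pT + pf) pg (gcomm pT pf T (L f)) (L g) = 0

/-- The third-order terms of an operator `T` of parity `pT` vanish iff all its triple
graded commutators with left multiplication operators vanish. -/
def ThirdOrderVanish (pT : ZMod 2) (T : A →ₗ[ℚ] A) : Prop :=
  ∀ (pf pg ph : ZMod 2) (f g h : A),
    f ∈ S.hom pf → g ∈ S.hom pg → h ∈ S.hom ph →
      gcomm (pT + pf + pg) ph
        (gcomm (pT + pf) pg (gcomm pT pf T (L f)) (L g)) (L h) = 0

/-- `ν_F^{(0)} = ((-1)^{ε_A}/4)(∂_A + F_A/2)(E^{AB} F_B)`. -/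
def nuF0 (E : ι → ι → A) (F : ι → A) : A :=
  (1/4 : ℚ) • ∑ a, ∑ b, sgn (S.ε a) •
    (S.D a (E a b * F b) + (1/2 : ℚ) • (F a * (E a b * F b)))

/-- `ν^{(1)} = (-1)^{ε_A} (∂_B ∂_A E^{AB})`. -/
def nu1 (E : ι → ι → A) : A :=
  ∑ a, ∑ b, sgn (S.ε a) • S.D b (S.D a (E a b))

/-- `ν^{(2)} = (-1)^{ε_A ε_C} (∂_D E^{AB}) E_{BC} (∂_A E^{CD})`. -/
def nu2 (E Einv : ι → ι → A) : A :=
  ∑ a, ∑ b, ∑ c, ∑ d, sgn (S.ε a * S.ε c) •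
    (S.D d (E a b) * (Einv b c * S.D a (E c d)))

/-- `ν_F = ν_F^{(0)} + ν^{(1)}/8 - ν^{(2)}/24`. -/
def nuF (E Einv : ι → ι → A) (F : ι → A) : A :=
  S.nuF0 E F + (1/8 : ℚ) • S.nu1 E - (1/24 : ℚ) • S.nu2 E Einv

/-- The divergence `div_1 X = (-1)^{ε_A} (∂_A X^A)`. -/
def div1 (X : ι → A) : A := ∑ a, sgn (S.ε a) • S.D a (X a)

/-- A form variation (infinitesimal coordinate transformation `δΓ^A = X^A`, compared
at the same argument): an even derivation commuting with the partial derivatives. -/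
structure FormVar (X : ι → A) (δv : A →ₗ[ℚ] A) : Prop where
  deriv : ∀ a b : A, δv (a * b) = δv a * b + a * δv b
  commD : ∀ (i : ι) (a : A), δv (S.D i a) = S.D i (δv a)
  X_mem : ∀ i, X i ∈ S.hom (S.ε i)

/-- The form variation of a (2,0)-tensor `E^{AB}` under `δΓ^A = X^A`:
`δE^{AB} = (X^A ∂⃖_C) E^{CB} + E^{AC}(∂_C X^B) - X^C (∂_C E^{AB})`. -/
def VarE (X : ι → A) (δv : A →ₗ[ℚ] A) (E : ι → ι → A) : Prop :=
  ∀ a b, δv (E a b) =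
    (∑ c, sgn (S.ε c * (S.ε a + 1)) • (S.D c (X a) * E c b))
    + (∑ c, E a c * S.D c (X b))
    - ∑ c, X c * S.D c (E a b)

/-- The form variation of a line bundle connection `F_A` under `δΓ^A = X^A`:
`δF_A = -(∂_A X^B) F_B - ∂_A(div_1 X) - X^C (∂_C F_A)`. -/
def VarF (X : ι → A) (δv : A →ₗ[ℚ] A) (F : ι → A) : Prop :=
  ∀ a, δv (F a) =
    - (∑ b, S.D a (X b) * F b) - S.D a (S.div1 X) - ∑ c, X c * S.D c (F a)

/-- Khudaverdian–Voronov's odd quantity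
`ν(F¹;F²,E) = ((-1)^{ε_A}/4)(∂_A + (F¹_A+F²_A)/2)(E^{AB}(F¹_B - F²_B))`. -/
def nu12 (E : ι → ι → A) (F1 F2 : ι → A) : A :=
  (1/4 : ℚ) • ∑ a, ∑ b, sgn (S.ε a) •
    (S.D a (E a b * (F1 b - F2 b))
      + (1/2 : ℚ) • ((F1 a + F2 a) * (E a b * (F1 b - F2 b))))

/-- The odd Laplacian `Δ_ρ = ((-1)^{ε_A}/(2ρ)) ∂_A ρ E^{AB} ∂_B` for a density `ρ`
with inverse `ρinv`. -/
def lapRho (E : ι → ι → A) (ρ ρinv : A) : A →ₗ[ℚ] A :=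
  (1/2 : ℚ) • ∑ a, ∑ b, sgn (S.ε a) •
    (L ρinv ∘ₗ S.D a ∘ₗ L ρ ∘ₗ L (E a b) ∘ₗ S.D b)

/-- `ν_ρ^{(0)} = (Δ_1 √ρ)/√ρ`, where `sq = √ρ` and `sqinv = 1/√ρ`. -/
def nuRho0 (E : ι → ι → A) (sq sqinv : A) : A :=
  sqinv * (S.lap (fun _ => (0 : A)) E sq)

/-- `ν_ρ = ν_ρ^{(0)} + ν^{(1)}/8 - ν^{(2)}/24`. -/
def nuRho (E Einv : ι → ι → A) (sq sqinv : A) : A :=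
  S.nuRho0 E sq sqinv + (1/8 : ℚ) • S.nu1 E - (1/24 : ℚ) • S.nu2 E Einv

/-- Khudaverdian's operator `Δ_E = Δ_1 + ν^{(1)}/8 - ν^{(2)}/24`. -/
def lapE (E Einv : ι → ι → A) : A →ₗ[ℚ] A :=
  S.lap (fun _ => (0 : A)) E + L ((1/8 : ℚ) • S.nu1 E - (1/24 : ℚ) • S.nu2 E Einv)

/-- The reordered Christoffel symbols `Γ^A{}_{BC} = (-1)^{ε_A ε_B} Γ_B{}^A{}_C`. -/
def Gup (Gm : ι → ι → ι → A) (a b c : ι) : A := sgn (S.ε a * S.ε b) • Gm b a c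

/-- The reordered Riemann curvature tensor
`R^A{}_{BCD} = (-1)^{ε_A ε_B}(∂_B Γ^A{}_{CD}) + Γ^A{}_{BE} Γ^E{}_{CD} - (-1)^{ε_B ε_C}(B ↔ C)`,
expressed through the reordered Christoffel symbols `Gu = Γ^·{}_{··}`. -/
def riemRe (Gu : ι → ι → ι → A) (a b c d : ι) : A :=
  sgn (S.ε a * S.ε b) • S.D b (Gu a c d) + (∑ e, Gu a b e * Gu e c d)
  - sgn (S.ε b * S.ε c) •
      (sgn (S.ε a * S.ε c) • S.D c (Gu a b d) + ∑ e, Gu a c e * Gu e b d)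

/-- The Ricci tensor `R_{AB} = R^C{}_{CAB}`. -/
def ricci (Gu : ι → ι → ι → A) (a b : ι) : A := ∑ c, S.riemRe Gu c c a b

/-- The odd scalar curvature `R = R_{AB} E^{BA}`. -/
def scalarR (Gu : ι → ι → ι → A) (E : ι → ι → A) : A :=
  ∑ a, ∑ b, S.ricci Gu a b * E b a

/-- The Riemann curvature tensor
`R_{AB}{}^C{}_D = (∂_A Γ_B{}^C{}_D) + (-1)^{ε_B ε_C} Γ_A{}^C{}_E Γ^E{}_{BD} - (-1)^{ε_A ε_B}(A ↔ B)`,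
built from the Christoffel symbols `Gm = Γ_·{}^·{}_·`. -/
def riem (Gm : ι → ι → ι → A) (a b c d : ι) : A :=
  S.D a (Gm b c d) + sgn (S.ε b * S.ε c) • (∑ e, Gm a c e * S.Gup Gm e b d)
  - sgn (S.ε a * S.ε b) •
      (S.D b (Gm a c d) + sgn (S.ε a * S.ε c) • ∑ e, Gm b c e * S.Gup Gm e a d)

/-- The Christoffel symbols with three lower indices,
`Γ_{ABC} = E_{AD} Γ^D{}_{BC} (-1)^{ε_B}`, built from `Gu = Γ^·{}_{··}`. -/
def Glow (Einv : ι → ι → A) (Gu : ι → ι → ι → A) (a b c : ι) : A :=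
  sgn (S.ε b) • ∑ d, Einv a d * Gu d b c

/-- `γ_{ABC} = Γ_{ABC} - (1/3)(E_{AB} ∂⃖_C + E_{AC} ∂⃖_B (-1)^{ε_B ε_C})`. -/
def gam (Einv : ι → ι → A) (Gu : ι → ι → ι → A) (a b c : ι) : A :=
  S.Glow Einv Gu a b c
  - (1/3 : ℚ) • (sgn (S.ε c * (S.ε a + S.ε b)) • S.D c (Einv a b)
      + sgn (S.ε b * S.ε c) • (sgn (S.ε b * (S.ε a + S.ε c)) • S.D b (Einv a c)))

end SuperAlg

namespace SuperAlg

/-! ### Signs -/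

section Sign

theorem zmod_two_cases (p : ZMod 2) : p = 0 ∨ p = 1 := by
  revert p; decide

@[simp] theorem sgn_zero : sgn 0 = 1 := by simp [sgn]

@[simp] theorem sgn_one : sgn 1 = -1 := by simp [sgn]

@[simp] theorem zmod_two_one_add_one : (1 + 1 : ZMod 2) = 0 := by decide

theorem sgn_add (p q : ZMod 2) : sgn (p + q) = sgn p * sgn q := by
  rcases zmod_two_cases p with rfl | rfl <;> rcases zmod_two_cases q with rfl | rfl <;> simp

theorem sgn_sq (p : ZMod 2) : sgn p * sgn p = 1 := by
  rcases zmod_two_cases p with rfl | rfl <;> simp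

end Sign

/-! ### Brackets as biderivations -/

section Bracket

variable {ι : Type} [Fintype ι] [DecidableEq ι] {A : Type} [Ring A] [Algebra ℚ A]
variable (S : SuperAlg ι A) {E Einv : ι → ι → A} {F : ι → A}

theorem hom_congr {p q : ZMod 2} {a : A} (h : a ∈ S.hom p) (e : p = q) : a ∈ S.hom q := e ▸ h

theorem brkt_add_left (M : ι → ι → A) (p : ZMod 2) (f f' g : A) :
    S.brkt M p (f + f') g = S.brkt M p f g + S.brkt M p f' g := by
  simp [brkt, add_mul, Finset.sum_add_distrib]

theorem brkt_smul_left (M : ι → ι → A) (p : ZMod 2) (c : ℚ) (f g : A) :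
    S.brkt M p (c • f) g = c • S.brkt M p f g := by
  simp [brkt, Finset.smul_sum, smul_comm c]

theorem brkt_neg_left (M : ι → ι → A) (p : ZMod 2) (f g : A) :
    S.brkt M p (-f) g = -S.brkt M p f g := by
  simpa using S.brkt_smul_left M p (-1) f g

theorem brkt_sub_left (M : ι → ι → A) (p : ZMod 2) (f f' g : A) :
    S.brkt M p (f - f') g = S.brkt M p f g - S.brkt M p f' g := by
  rw [sub_eq_add_neg, brkt_add_left, brkt_neg_left, sub_eq_add_neg]

theorem brkt_coord (M : ι → ι → A) (p : ZMod 2) (f : A) (b : ι) :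
    S.brkt M p f (S.coord b) = ∑ a, sgn (S.ε a * (p + 1)) • (S.D a f * M a b) := by
  simp [brkt, S.D_coord]

/-- The vector field `(f, ·)` has components `(f, Γ^B)`. -/
theorem brkt_eq_sum_coord (M : ι → ι → A) (p : ZMod 2) (f g : A) :
    S.brkt M p f g = ∑ b, S.brkt M p f (S.coord b) * S.D b g := by
  simp only [brkt_coord, Finset.sum_mul]
  rw [Finset.sum_comm]
  simp [brkt, mul_assoc]

theorem brkt_sum_right (M : ι → ι → A) (p : ZMod 2) (f : A) (g : ι → A) :
    S.brkt M p f (∑ a, g a) = ∑ a, S.brkt M p f (g a) := by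
  rw [brkt_eq_sum_coord]
  simp only [map_sum, Finset.mul_sum]
  rw [Finset.sum_comm]
  exact Finset.sum_congr rfl fun a _ => (S.brkt_eq_sum_coord M p f (g a)).symm

theorem brkt_smul_right (M : ι → ι → A) (p : ZMod 2) (c : ℚ) (f g : A) :
    S.brkt M p f (c • g) = c • S.brkt M p f g := by
  simp [brkt, Finset.smul_sum, smul_comm c]

theorem coord_brkt (M : ι → ι → A) (g : A) (c : ι) :
    S.brkt M (S.ε c) (S.coord c) g = ∑ d, M c d * S.D d g := by
  have h : sgn (S.ε c * (S.ε c + 1)) = 1 := by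
    rcases zmod_two_cases (S.ε c) with h | h <;> simp [h]
  simp [brkt, S.D_coord, h, ← Finset.smul_sum]

theorem brkt_mem (hE : S.AntiSymp E Einv) {p q : ZMod 2} {f g : A} (hf : f ∈ S.hom p)
    (hg : g ∈ S.hom q) : S.brkt E p f g ∈ S.hom (p + q + 1) := by
  refine Submodule.sum_mem _ fun a _ => Submodule.sum_mem _ fun b _ => Submodule.smul_mem _ _ ?_
  refine S.hom_congr
    (S.mul_mem (S.D_mem a hf) (S.mul_mem (hE.E_mem a b) (S.D_mem b hg))) ?_
  have key : ∀ p q x y : ZMod 2, p + x + (x + y + 1 + (q + y)) = p + q + 1 := by decide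
  exact key _ _ _ _

theorem brkt_coord_mem (hE : S.AntiSymp E Einv) {p : ZMod 2} {f : A} (hf : f ∈ S.hom p)
    (b : ι) : S.brkt E p f (S.coord b) ∈ S.hom (p + S.ε b + 1) :=
  S.brkt_mem hE hf (S.coord_mem b)

theorem brkt_mul (hE : S.AntiSymp E Einv) {p q : ZMod 2} {f g : A} (hf : f ∈ S.hom p)
    (hg : g ∈ S.hom q) (h : A) :
    S.brkt E p f (g * h) = S.brkt E p f g * h + sgn ((p + 1) * q) • (g * S.brkt E p f h) := by
  simp only [S.brkt_eq_sum_coord E p f (g * h), S.brkt_eq_sum_coord E p f g,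
    S.brkt_eq_sum_coord E p f h, Finset.sum_mul, Finset.mul_sum, Finset.smul_sum,
    ← Finset.sum_add_distrib]
  refine Finset.sum_congr rfl fun b _ => ?_
  rw [S.D_leibniz b h hg, mul_add, ← mul_assoc, mul_smul_comm, ← mul_assoc,
    S.supercomm (S.brkt_coord_mem hE hf b) hg, smul_mul_assoc, smul_smul, mul_assoc g]
  congr 2
  rw [← sgn_add]
  congr 1
  have key : ∀ p q x : ZMod 2, x * q + (p + x + 1) * q = (p + 1) * q := by decide
  exact key _ _ _

theorem brkt_skew (hE : S.AntiSymp E Einv) {p q : ZMod 2} {f g : A} (hf : f ∈ S.hom p)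
    (hg : g ∈ S.hom q) :
    S.brkt E p f g = -sgn ((p + 1) * (q + 1)) • S.brkt E q g f := by
  simp only [brkt, Finset.smul_sum]
  rw [Finset.sum_comm]
  refine Finset.sum_congr rfl fun b _ => Finset.sum_congr rfl fun a _ => ?_
  -- reverse the order of the three factors, then transpose `E`
  rw [S.supercomm (S.D_mem a hf) (S.mul_mem (hE.E_mem a b) (S.D_mem b hg)),
    S.supercomm (hE.E_mem a b) (S.D_mem b hg), hE.E_skew a b]
  simp only [smul_mul_assoc, mul_smul_comm, smul_smul, mul_assoc]
  congr 1
  rcases zmod_two_cases p with rfl | rfl <;> rcases zmod_two_cases q with rfl | rfl <;>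
    rcases zmod_two_cases (S.ε a) with ha | ha <;>
    rcases zmod_two_cases (S.ε b) with hb | hb <;> simp [ha, hb]

/-- The Jacobi identity with nested brackets on the left. -/
theorem jacobi_left (hE : S.AntiSymp E Einv) (hJac : S.JacobiId E) {p q r : ZMod 2} {f g h : A}
    (hf : f ∈ S.hom p) (hg : g ∈ S.hom q) (hh : h ∈ S.hom r) :
    sgn ((p + 1) * (r + 1)) • S.brkt E (p + q + 1) (S.brkt E p f g) h
      + sgn ((q + 1) * (p + 1)) • S.brkt E (q + r + 1) (S.brkt E q g h) f
      + sgn ((r + 1) * (q + 1)) • S.brkt E (r + p + 1) (S.brkt E r h f) g = 0 := by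
  have key := hJac p q r f g h hf hg hh
  rw [S.brkt_skew hE hf (S.brkt_mem hE hg hh), S.brkt_skew hE hg (S.brkt_mem hE hh hf),
    S.brkt_skew hE hh (S.brkt_mem hE hf hg)] at key
  rcases zmod_two_cases p with rfl | rfl <;> rcases zmod_two_cases q with rfl | rfl <;>
    rcases zmod_two_cases r with rfl | rfl <;> simp at key ⊢ <;>
    first
      | linear_combination (norm := module) key
      | linear_combination (norm := module) -key

/-- The Jacobi identity as a Leibniz rule: the commutator of Hamiltonian vector fields is
Hamiltonian. -/
theorem jacobi_leibniz (hE : S.AntiSymp E Einv) (hJac : S.JacobiId E) {p q r : ZMod 2}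
    {f g h : A} (hf : f ∈ S.hom p) (hg : g ∈ S.hom q) (hh : h ∈ S.hom r) :
    S.brkt E p f (S.brkt E q g h) = S.brkt E (p + q + 1) (S.brkt E p f g) h
      + sgn ((p + 1) * (q + 1)) • S.brkt E q g (S.brkt E p f h) := by
  have key := hJac p q r f g h hf hg hh
  have e : S.brkt E q g (S.brkt E r h f)
      = -sgn ((r + 1) * (p + 1)) • S.brkt E q g (S.brkt E p f h) := by
    rw [S.brkt_skew hE hh hf, brkt_smul_right]
  rw [e, S.brkt_skew hE hh (S.brkt_mem hE hf hg)] at key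
  rcases zmod_two_cases p with rfl | rfl <;> rcases zmod_two_cases q with rfl | rfl <;>
    rcases zmod_two_cases r with rfl | rfl <;> simp at key ⊢ <;>
    first
      | linear_combination (norm := module) key
      | linear_combination (norm := module) -key

/-! ### The R-bracket as a coboundary -/

/-- The contraction `φ f = Σ_A (f, Γ^A) F_A` of the connection `F` with the Hamiltonian vector
field of `f`, for `f` of parity `p`. -/
def phi (E : ι → ι → A) (F : ι → A) (p : ZMod 2) (f : A) : A :=
  ∑ a, S.brkt E p f (S.coord a) * F a

theorem phi_mem (hE : S.AntiSymp E Einv) (hF : ∀ a, F a ∈ S.hom (S.ε a)) {p : ZMod 2} {f : A}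
    (hf : f ∈ S.hom p) : S.phi E F p f ∈ S.hom (p + 1) := by
  refine Submodule.sum_mem _ fun a _ => ?_
  refine S.hom_congr (S.mul_mem (S.brkt_coord_mem hE hf a) (hF a)) ?_
  have key : ∀ p x : ZMod 2, p + x + 1 + x = p + 1 := by decide
  exact key _ _

theorem phi_add (p : ZMod 2) (f g : A) :
    S.phi E F p (f + g) = S.phi E F p f + S.phi E F p g := by
  simp [phi, brkt_add_left, add_mul, Finset.sum_add_distrib]

theorem phi_smul (p : ZMod 2) (c : ℚ) (f : A) :
    S.phi E F p (c • f) = c • S.phi E F p f := by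
  simp [phi, brkt_smul_left, Finset.smul_sum]

/-- The R-bracket as the curvature contracted with two Hamiltonian vector fields. -/
theorem brkt_curvUp_eq_sum (hE : S.AntiSymp E Einv) {p q : ZMod 2} {f g : A}
    (hg : g ∈ S.hom q) :
    S.brkt (fun a b => S.curvUp E F a b) p f g =
      ∑ b, ∑ c, (sgn q * sgn (q * S.ε c)) •
        (S.brkt E p f (S.coord b) * (S.curv F b c * S.brkt E q g (S.coord c))) := by
  have h1 : ∀ c, S.brkt E q g (S.coord c)
      = -sgn ((q + 1) * (S.ε c + 1)) • ∑ d, E c d * S.D d g := fun c => by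
    rw [S.brkt_skew hE hg (S.coord_mem c), coord_brkt]
  have h2 : ∀ c, sgn q * sgn (q * S.ε c) * -sgn ((q + 1) * (S.ε c + 1)) = sgn (S.ε c) := by
    intro c
    rcases zmod_two_cases q with rfl | rfl <;>
      rcases zmod_two_cases (S.ε c) with hc | hc <;> simp [hc]
  simp only [h1, mul_smul_comm, smul_smul, h2]
  simp only [brkt_coord]
  simp only [brkt, curvUp, Finset.sum_mul, Finset.mul_sum, Finset.smul_sum,
    smul_mul_assoc, mul_smul_comm, smul_smul, mul_assoc]
  -- both sides are sums over `a, b, c, d`, in different orders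
  calc _ = ∑ a, ∑ b, ∑ c, ∑ d, (sgn (S.ε a * (p + 1)) * sgn (S.ε c)) •
        (S.D a f * (E a b * (S.curv F b c * (E c d * S.D d g)))) := by
        refine Finset.sum_congr rfl fun a _ => ?_
        rw [Finset.sum_comm]
        refine Finset.sum_congr rfl fun b _ => ?_
        rw [Finset.sum_comm]
    _ = _ := by
        rw [Finset.sum_comm]
        refine Finset.sum_congr rfl fun b _ => ?_
        rw [Finset.sum_comm]
        refine Finset.sum_congr rfl fun c _ => ?_
        rw [Finset.sum_comm]
        refine Finset.sum_congr rfl fun d _ => Finset.sum_congr rfl fun a _ => ?_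
        rw [mul_comm]

/-- Cartan's formula for `R = dF` on Hamiltonian vector fields. -/
theorem brkt_curvUp (hE : S.AntiSymp E Einv) (hF : ∀ a, F a ∈ S.hom (S.ε a))
    (hJac : S.JacobiId E) {p q : ZMod 2} {f g : A} (hf : f ∈ S.hom p) (hg : g ∈ S.hom q) :
    S.brkt (fun a b => S.curvUp E F a b) p f g =
      sgn q • (S.brkt E p f (S.phi E F q g) - S.phi E F (p + q + 1) (S.brkt E p f g))
        - S.brkt E (p + 1) (S.phi E F p f) g := by
  have hsk : S.brkt E (p + 1) (S.phi E F p f) g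
      = (sgn q * sgn ((p + 1) * (q + 1))) • S.brkt E q g (S.phi E F p f) := by
    rw [S.brkt_skew hE (S.phi_mem hE hF hf) hg]
    congr 1
    rcases zmod_two_cases p with rfl | rfl <;> rcases zmod_two_cases q with rfl | rfl <;> simp
  have e1 : S.brkt E p f (S.phi E F q g) =
      ∑ a, S.brkt E p f (S.brkt E q g (S.coord a)) * F a
      + ∑ b, ∑ a, sgn (q * S.ε a) •
        (S.brkt E p f (S.coord b) * (S.D b (F a) * S.brkt E q g (S.coord a))) := by
    rw [Finset.sum_comm, phi, brkt_sum_right, ← Finset.sum_add_distrib]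
    refine Finset.sum_congr rfl fun a _ => ?_
    rw [S.brkt_mul hE hf (S.brkt_coord_mem hE hg a), S.supercomm (S.brkt_coord_mem hE hg a)
      (S.brkt_mem hE hf (hF a)), S.brkt_eq_sum_coord E p f (F a), smul_smul, Finset.sum_mul,
      Finset.smul_sum]
    congr 1
    refine Finset.sum_congr rfl fun b _ => ?_
    rw [mul_assoc]
    congr 1
    rcases zmod_two_cases p with rfl | rfl <;> rcases zmod_two_cases q with rfl | rfl <;>
      rcases zmod_two_cases (S.ε a) with ha | ha <;> simp [ha]
  have e2 : S.brkt E q g (S.phi E F p f) =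
      ∑ a, S.brkt E q g (S.brkt E p f (S.coord a)) * F a
      + sgn ((p + 1) * (q + 1)) • ∑ b, ∑ a, (sgn (q * S.ε a) * sgn (S.ε b * S.ε a)) •
        (S.brkt E p f (S.coord b) * (S.D a (F b) * S.brkt E q g (S.coord a))) := by
    rw [phi, brkt_sum_right, Finset.smul_sum, ← Finset.sum_add_distrib]
    refine Finset.sum_congr rfl fun b _ => ?_
    rw [S.brkt_mul hE hg (S.brkt_coord_mem hE hf b), S.brkt_eq_sum_coord E q g (F b),
      Finset.mul_sum, Finset.smul_sum, Finset.smul_sum]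
    congr 1
    refine Finset.sum_congr rfl fun a _ => ?_
    rw [S.supercomm (S.brkt_coord_mem hE hg a) (S.D_mem a (hF b))]
    simp only [mul_smul_comm, smul_smul]
    congr 1
    rcases zmod_two_cases p with rfl | rfl <;> rcases zmod_two_cases q with rfl | rfl <;>
      rcases zmod_two_cases (S.ε a) with ha | ha <;>
      rcases zmod_two_cases (S.ε b) with hb | hb <;> simp [ha, hb]
  have e3 : S.phi E F (p + q + 1) (S.brkt E p f g) =
      ∑ a, S.brkt E p f (S.brkt E q g (S.coord a)) * F a
      - sgn ((p + 1) * (q + 1)) • ∑ a, S.brkt E q g (S.brkt E p f (S.coord a)) * F a := by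
    rw [phi, Finset.smul_sum, ← Finset.sum_sub_distrib]
    refine Finset.sum_congr rfl fun a _ => ?_
    rw [S.jacobi_leibniz hE hJac hf hg (S.coord_mem a), add_mul, smul_mul_assoc,
      add_sub_cancel_right]
  have e4 : S.brkt (fun a b => S.curvUp E F a b) p f g =
      sgn q • (∑ b, ∑ a, sgn (q * S.ε a) •
        (S.brkt E p f (S.coord b) * (S.D b (F a) * S.brkt E q g (S.coord a)))
      - ∑ b, ∑ a, (sgn (q * S.ε a) * sgn (S.ε b * S.ε a)) •
        (S.brkt E p f (S.coord b) * (S.D a (F b) * S.brkt E q g (S.coord a)))) := by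
    rw [S.brkt_curvUp_eq_sum hE hg, ← Finset.sum_sub_distrib, Finset.smul_sum]
    refine Finset.sum_congr rfl fun b _ => ?_
    rw [← Finset.sum_sub_distrib, Finset.smul_sum]
    refine Finset.sum_congr rfl fun a _ => ?_
    rw [curv, sub_mul, mul_sub, smul_mul_assoc, mul_smul_comm]
    module
  have hs := sgn_sq ((p + 1) * (q + 1))
  rw [hsk, e4, e1, e2, e3, smul_add, smul_smul, mul_assoc (sgn q), hs]
  module

end Bracket

/-- The antibracket and the R-bracket are compatible:
`Σ_{cycl} (-1)^{ε_f(ε_h+1)} ((f,g),h)_R = Σ_{cycl} (-1)^{ε_f(ε_h+1)+ε_g} ((f,g)_R,h)`;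
this follows from the closedness (Bianchi identity) of the Ricci two-form `R_{AB}`. -/
theorem antibracket_R_bracket_compatible
    {ι : Type} [Fintype ι] [DecidableEq ι] {A : Type} [Ring A] [Algebra ℚ A]
    (S : SuperAlg ι A) (E Einv : ι → ι → A) (F : ι → A)
    (hE : S.AntiSymp E Einv) (hF : ∀ a, F a ∈ S.hom (S.ε a))
    (hJac : S.JacobiId E)
    (hBianchi : ∀ a b c : ι,
      sgn (S.ε a * S.ε c) • S.D a (S.curv F b c)
      + sgn (S.ε b * S.ε a) • S.D b (S.curv F c a)
      + sgn (S.ε c * S.ε b) • S.D c (S.curv F a b) = 0) :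
    ∀ (pf pg ph : ZMod 2) (f g h : A),
      f ∈ S.hom pf → g ∈ S.hom pg → h ∈ S.hom ph →
        sgn (pf * (ph + 1)) •
            S.brkt (fun a b => S.curvUp E F a b) (pf + pg + 1) (S.brkt E pf f g) h
        + sgn (pg * (pf + 1)) •
            S.brkt (fun a b => S.curvUp E F a b) (pg + ph + 1) (S.brkt E pg g h) f
        + sgn (ph * (pg + 1)) •
            S.brkt (fun a b => S.curvUp E F a b) (ph + pf + 1) (S.brkt E ph h f) g
        = sgn (pf * (ph + 1) + pg) •
            S.brkt E (pf + pg) (S.brkt (fun a b => S.curvUp E F a b) pf f g) h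
          + sgn (pg * (pf + 1) + ph) •
            S.brkt E (pg + ph) (S.brkt (fun a b => S.curvUp E F a b) pg g h) f
          + sgn (ph * (pg + 1) + pf) •
            S.brkt E (ph + pf) (S.brkt (fun a b => S.curvUp E F a b) ph h f) g := by
  intro pf pg ph f g h hf hg hh
  have mem : ∀ {p q : ZMod 2} {a b : A}, a ∈ S.hom p → b ∈ S.hom q →
      S.brkt E p a b ∈ S.hom (p + q + 1) := fun ha hb => S.brkt_mem hE ha hb
  have pm : ∀ {p : ZMod 2} {a : A}, a ∈ S.hom p → S.phi E F p a ∈ S.hom (p + 1) :=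
    fun ha => S.phi_mem hE hF ha
  rw [S.brkt_curvUp hE hF hJac (mem hf hg) hh, S.brkt_curvUp hE hF hJac (mem hg hh) hf,
    S.brkt_curvUp hE hF hJac (mem hh hf) hg, S.brkt_curvUp hE hF hJac hf hg,
    S.brkt_curvUp hE hF hJac hg hh, S.brkt_curvUp hE hF hJac hh hf]
  -- the prefactors match the sign conventions of the claim
  have j1 := congrArg (sgn pf • ·) (S.jacobi_left hE hJac hf hg (pm hh))
  have j2 := congrArg (sgn pg • ·) (S.jacobi_left hE hJac hg hh (pm hf))
  have j3 := congrArg (sgn ph • ·) (S.jacobi_left hE hJac hh hf (pm hg))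
  have j0 := congrArg (S.phi E F (pf + pg + ph)) (S.jacobi_left hE hJac hf hg hh)
  have z : S.phi E F (pf + pg + ph) 0 = 0 := by
    simpa using S.phi_smul (E := E) (F := F) (pf + pg + ph) 0 0
  rw [z] at j0
  clear z mem pm hBianchi
  simp only [brkt_sub_left, brkt_smul_left, phi_add, phi_smul] at j0 ⊢
  rcases zmod_two_cases pf with rfl | rfl <;> rcases zmod_two_cases pg with rfl | rfl <;>
    rcases zmod_two_cases ph with rfl | rfl <;>
    simp only [zero_add, add_zero, mul_zero, mul_one, zmod_two_one_add_one, sgn_zero,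
      sgn_one] at j0 j1 j2 j3 ⊢ <;>
    linear_combination (norm := module) j0 + j1 + j2 + j3

end SuperAlg
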